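/- Under Assumption 1, for every ε ∈ (0,1) the PHPIP Markov chain P^ε on the state space B is irreducible: for any two states z, z' ∈ B there is a finite sequence of transitions from z to z', each with positive probability under P^ε. -/

import Mathlib

/-! The chain is irreducible because every feasible move has positive probability. Whatever the
last two joint actions `a0, a1` were, agent `i` plays each `b ∈ R i (a1 i)` with positive
probability (`agentProb_pos`): exploration covers all feasible actions other than `a1 i` (and
`a0 i` after a utility decrease), while the remaining ones carry the weights `1 - ε`,
`(1 - ε) κ ε ^ Δ` or `(1 - ε) (1 - κ ε ^ Δ)`, positive because `0 < κ ≤ 1 / 2`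
(`kappa_pos`). So `(x, a) → (a, b)` is a transition as soon as `b` is feasible from `a`
(`transP_pos`). Since agents may stand still, per-agent feasibility lets the agents be
moved to their targets one after the other (`joint_reach`); from `(a0, a1)` one reaches in this
way some state `(y, b0)`, and one more step gives `(b0, b1)`. -/

open Finset Filter Topology
open scoped Classical

namespace PIPIPGame

variable {n : ℕ}

section Defs

variable (A : Fin n → Type) [∀ i, Fintype (A i)] [∀ i, DecidableEq (A i)]
  (U : Fin n → (∀ i, A i) → ℝ) (R : ∀ i, A i → Finset (A i))

/-- Assumption 1: reversibility, feasibility, and at least three available actions. -/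
def Assumption1 : Prop :=
  (∀ (i : Fin n) (a b : A i), b ∈ R i a ↔ a ∈ R i b) ∧
  (∀ (i : Fin n) (a b : A i), Relation.ReflTransGen (fun x y => y ∈ R i x) a b) ∧
  (∀ (i : Fin n) (a : A i), 3 ≤ (R i a).card)

/-- Assumption 2: unilateral feasible deviations change the utility by less than 1. -/
def Assumption2 : Prop :=
  ∀ (i : Fin n) (a a' : ∀ j, A j), a' i ∈ R i (a i) → (∀ j, j ≠ i → a' j = a j) →
    U i a' - U i a < 1

/-- `φ` is a potential function for the constrained game. -/
def IsPotential (φ : (∀ j, A j) → ℝ) : Prop :=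
  ∀ (i : Fin n) (a a' : ∀ j, A j), a' i ∈ R i (a i) → (∀ j, j ≠ i → a' j = a j) →
    U i a' - U i a = φ a' - φ a

/-- `C = max_i max_{a_i} |R_i(a_i)|`. -/
noncomputable def Cmax : ℕ :=
  Finset.univ.sup fun i : Fin n => Finset.univ.sup fun a : A i => (R i a).card

/-- Membership in the state space B. -/
def InB (z : (∀ j, A j) × (∀ j, A j)) : Prop := ∀ i, z.2 i ∈ R i (z.1 i)

/-- The probability that agent `i` chooses `b` under PHPIP with exploration rate `ε`
and parameter `κ`, the previous two joint actions being `a0, a1`. -/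
noncomputable def agentProb (ε κ : ℝ) (a0 a1 : ∀ j, A j) (i : Fin n) (b : A i) : ℝ :=
  if U i a0 ≤ U i a1 then
    (if b = a1 i then 1 - ε else 0)
    + (if b ∈ R i (a1 i) \ {a1 i} then ε / ((R i (a1 i) \ {a1 i}).card : ℝ) else 0)
  else
    (if b = a1 i then (1 - ε) * (κ * ε ^ (U i a0 - U i a1)) else 0)
    + (if b = a0 i then (1 - ε) * (1 - κ * ε ^ (U i a0 - U i a1)) else 0)
    + (if b ∈ R i (a1 i) \ {a0 i, a1 i} then
        ε / ((R i (a1 i) \ {a0 i, a1 i}).card : ℝ) else 0)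

/-- One-step transition probability of the PHPIP chain on pairs of joint actions. -/
noncomputable def transP (ε κ : ℝ) (z z' : (∀ j, A j) × (∀ j, A j)) : ℝ :=
  if z'.1 = z.2 then ∏ i, agentProb A U R ε κ z.1 z.2 i (z'.2 i) else 0

/-- Probability of a path (a list of states) as a product of step transition probabilities. -/
noncomputable def pathProb (ε κ : ℝ) (l : List ((∀ j, A j) × (∀ j, A j))) : ℝ :=
  ((l.zip l.tail).map fun p => transP A U R ε κ p.1 p.2).prod

/-- `l` is a positive-probability path of the family `{P^ε}` from `z` to `z'`. -/
def IsPath (κ : ℝ) (z z' : (∀ j, A j) × (∀ j, A j))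
    (l : List ((∀ j, A j) × (∀ j, A j))) : Prop :=
  l.head? = some z ∧ l.getLast? = some z' ∧
  l.Chain' (fun x y => ∃ ε, ε ∈ Set.Ioo (0 : ℝ) 1 ∧ 0 < transP A U R ε κ x y)

/-- `lam` is the resistance of the path `l`: `P^ε(l)/ε^lam` tends to a positive limit
as `ε → 0+`. -/
def HasResistance (κ : ℝ) (l : List ((∀ j, A j) × (∀ j, A j))) (lam : ℝ) : Prop :=
  0 ≤ lam ∧ ∃ L : ℝ, 0 < L ∧
    Tendsto (fun ε : ℝ => pathProb A U R ε κ l / ε ^ lam) (𝓝[>] (0 : ℝ)) (𝓝 L)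

/-- Accessibility by positive-probability transitions of `P^ε`. -/
def Accessible (ε κ : ℝ) (x y : (∀ j, A j) × (∀ j, A j)) : Prop :=
  Relation.ReflTransGen (fun u v => 0 < transP A U R ε κ u v) x y

/-- A recurrent communication class of `P^ε` (contained in the state space B). -/
def IsRecurrentClass (ε κ : ℝ) (S : Set ((∀ j, A j) × (∀ j, A j))) : Prop :=
  S.Nonempty ∧ (∀ x ∈ S, InB A R x) ∧
  (∀ x ∈ S, ∀ y ∈ S, Accessible A U R ε κ x y) ∧
  (∀ x ∈ S, ∀ y, Accessible A U R ε κ x y → y ∈ S)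

/-- `m`-step transition probability of `P^ε` on B. -/
noncomputable def mstep (ε κ : ℝ) : ℕ → ((∀ j, A j) × (∀ j, A j)) → ((∀ j, A j) × (∀ j, A j)) → ℝ
  | 0, z, z' => if z = z' then 1 else 0
  | (m+1), z, z' => ∑ y ∈ Finset.univ.filter (InB A R),
      mstep ε κ m z y * transP A U R ε κ y z'

/-- `(a, a')` is an edge of `E_single`: exactly one agent changes its action,
and the change is feasible. -/
def ESingle (a a' : ∀ j, A j) : Prop :=
  ∃ i : Fin n, a' i ≠ a i ∧ a' i ∈ R i (a i) ∧ ∀ j, j ≠ i → a' j = a j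

/-- Agent `i` can go from `a` to `b` in exactly `k` feasible steps. -/
def reachesIn (i : Fin n) : ℕ → A i → A i → Prop
  | 0, a, b => a = b
  | (k+1), a, b => ∃ c ∈ R i a, reachesIn i k c b

/-- The minimal number of steps needed by agent `i` to move from `a` to `b`. -/
noncomputable def minSteps (i : Fin n) (a b : A i) : ℕ :=
  sInf {k : ℕ | reachesIn A R i k a b}

/-- `D = max_i D_i`. -/
noncomputable def Dmax : ℕ :=
  Finset.univ.sup fun i : Fin n =>
    Finset.univ.sup fun p : A i × A i => minSteps A R i p.1 p.2

/-- The PIPIP exploration rate `ε(t) = t^{-1/(n(D+1))}`. -/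
noncomputable def epsRate (t : ℕ) : ℝ :=
  (t : ℝ) ^ (-(1 : ℝ) / (n * (Dmax A R + 1)))

end Defs

end PIPIPGame

open PIPIPGame Finset Filter Topology

section Irreducibility

variable {n : ℕ} {A : Fin n → Type}
  {U : Fin n → (∀ i, A i) → ℝ} {R : ∀ i, A i → Finset (A i)} {ε κ : ℝ}

/-- The existence of an agent `i` with some action `a` matters: without agents `Cmax A R = 0`, and
the lower bound on `κ` is `-1`. -/
lemma kappa_pos [∀ i, Fintype (A i)] (i : Fin n) (a : A i) (h3 : 3 ≤ (R i a).card)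
    (hκ : 1 / ((Cmax A R : ℝ) - 1) < κ) : 0 < κ := by
  have h : 3 ≤ Cmax A R := by
    refine h3.trans ?_
    unfold Cmax
    exact (Finset.le_sup (f := fun a : A i => (R i a).card) (Finset.mem_univ a)).trans
      (Finset.le_sup (f := fun i : Fin n => Finset.univ.sup fun a : A i => (R i a).card)
        (Finset.mem_univ i))
  have h' : (3 : ℝ) ≤ Cmax A R := by exact_mod_cast h
  exact lt_of_le_of_lt (one_div_nonneg.mpr (by linarith)) hκ

lemma agentProb_pos [∀ i, DecidableEq (A i)] (hε : 0 < ε) (hε1 : ε < 1)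
    (hκ0 : 0 < κ) (hκ1 : κ ≤ 1 / 2)
    (a0 a1 : ∀ j, A j) (i : Fin n) (b : A i) (hb : b ∈ R i (a1 i)) :
    0 < agentProb A U R ε κ a0 a1 i b := by
  have h1ε : 0 < 1 - ε := by linarith
  -- The weight of uniform exploration over `S`, whatever set is explored.
  have explore_nonneg (S : Finset (A i)) :
      0 ≤ (if b ∈ S then ε / (S.card : ℝ) else 0) := by
    split_ifs <;> positivity
  have explore_pos (S : Finset (A i)) (h : b ∈ S) :
      0 < (if b ∈ S then ε / (S.card : ℝ) else 0) := by
    rw [if_pos h]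
    exact div_pos hε (by exact_mod_cast Finset.card_pos.mpr ⟨b, h⟩)
  unfold agentProb
  by_cases hU : U i a0 ≤ U i a1
  · rw [if_pos hU]
    by_cases h : b = a1 i
    · rw [if_pos h]
      exact add_pos_of_pos_of_nonneg h1ε (explore_nonneg _)
    · rw [if_neg h, zero_add]
      exact explore_pos _ (by simp [hb, h])
  · rw [if_neg hU]
    have hp : 0 < ε ^ (U i a0 - U i a1) := Real.rpow_pos_of_pos hε _
    have hle : ε ^ (U i a0 - U i a1) ≤ 1 :=
      Real.rpow_le_one hε.le hε1.le (by linarith)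
    have hstay : 0 < (1 - ε) * (κ * ε ^ (U i a0 - U i a1)) := by positivity
    have hback : 0 < (1 - ε) * (1 - κ * ε ^ (U i a0 - U i a1)) :=
      mul_pos h1ε (by nlinarith)
    by_cases h : b = a1 i
    · rw [if_pos h]
      refine add_pos_of_pos_of_nonneg (add_pos_of_pos_of_nonneg hstay ?_) (explore_nonneg _)
      split_ifs
      exacts [hback.le, le_rfl]
    · rw [if_neg h, zero_add]
      by_cases h' : b = a0 i
      · rw [if_pos h']
        exact add_pos_of_pos_of_nonneg hback (explore_nonneg _)
      · rw [if_neg h', zero_add]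
        exact explore_pos _ (by simp [hb, h, h'])

lemma transP_pos [∀ i, Fintype (A i)] [∀ i, DecidableEq (A i)] (h1 : Assumption1 A R)
    (hκ : 1 / ((Cmax A R : ℝ) - 1) < κ ∧ κ ≤ 1 / 2) (hε : 0 < ε) (hε1 : ε < 1)
    (x a b : ∀ j, A j) (hab : InB A R (a, b)) : 0 < transP A U R ε κ (x, a) (a, b) := by
  unfold transP
  rw [if_pos rfl]
  exact Finset.prod_pos fun i _ => agentProb_pos hε hε1
    (kappa_pos i (a i) (h1.2.2 i (a i)) hκ.1) hκ.2 x a i (b i) (hab i)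

/-- Joint actions are connected by jointly feasible moves: change one agent at a time along its
own feasible chain, the others repeating their action. -/
lemma joint_reach (hrefl : ∀ i a, a ∈ R i a)
    (hfeas : ∀ (i : Fin n) (a b : A i), Relation.ReflTransGen (fun x y => y ∈ R i x) a b)
    (a b : ∀ j, A j) : Relation.ReflTransGen (fun x y => InB A R (x, y)) a b := by
  have single (c : ∀ j, A j) (i : Fin n) (t : A i) :
      Relation.ReflTransGen (fun x y => InB A R (x, y)) c (Function.update c i t) := by
    have h : Relation.ReflTransGen (fun x y => InB A R (x, y))
        (Function.update c i (c i)) (Function.update c i t) := by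
      refine Relation.ReflTransGen.lift (Function.update c i) ?_ _ _ (hfeas i (c i) t)
      intro u v huv j
      rcases eq_or_ne j i with rfl | hj
      · simpa using huv
      · simpa [hj] using hrefl j (c j)
    rwa [Function.update_eq_self] at h
  have partly (s : Finset (Fin n)) :
      Relation.ReflTransGen (fun x y => InB A R (x, y)) a (s.piecewise b a) := by
    induction s using Finset.induction_on with
    | empty => rw [Finset.piecewise_empty]
    | insert i s _ ih =>
      rw [Finset.piecewise_insert]
      exact ih.trans (single _ _ _)
  simpa using partly Finset.univ

end Irreducibility

/-- **Irreducibility of PHPIP.** Under Assumption 1, for every `ε ∈ (0,1)` the PHPIP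
chain `P^ε` is irreducible on B: any state of B is accessible from any other by a
finite sequence of positive-probability transitions. -/
theorem phpip_irreducible
    {n : ℕ} (A : Fin n → Type) [∀ i, Fintype (A i)] [∀ i, DecidableEq (A i)]
    (U : Fin n → (∀ i, A i) → ℝ) (R : ∀ i, A i → Finset (A i)) (κ : ℝ)
    (hrefl : ∀ i a, a ∈ R i a)
    (h1 : Assumption1 A R)
    (hκ : 1 / ((Cmax A R : ℝ) - 1) < κ ∧ κ ≤ 1 / 2)
    (ε : ℝ) (hε : 0 < ε) (hε1 : ε < 1) :
    ∀ z z', InB A R z → InB A R z' →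
      Relation.ReflTransGen (fun u v => 0 < transP A U R ε κ u v) z z' := by
  rintro ⟨a0, a1⟩ ⟨b0, b1⟩ _ hz'
  have key (b : ∀ j, A j) (hb : Relation.ReflTransGen (fun x y => InB A R (x, y)) a1 b) :
      ∃ y, Relation.ReflTransGen (fun u v => 0 < transP A U R ε κ u v) (a0, a1) (y, b) := by
    induction hb with
    | refl => exact ⟨a0, .refl⟩
    | @tail c d _ hcd ih =>
      obtain ⟨y, hy⟩ := ih
      exact ⟨c, hy.tail (transP_pos h1 hκ hε hε1 y c d hcd)⟩
  obtain ⟨y, hy⟩ := key b0 (joint_reach hrefl h1.2.1 a1 b0)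
  exact hy.tail (transP_pos h1 hκ hε hε1 y b0 b1 hz')
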